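/- Let 0 < s < 1 and let f lie in the finite linear span of the Haar system H of ℝ⁺. Then Σ_{i≥0} ‖D^s_{(i)} f‖²_{L²(ℝ⁺)} = Σ_{h∈H} |I(h)|^{-2s} |⟨f,h⟩|², and there exists a constant c > 0 (independent of f) such that the dyadic energy satisfies E^δ_s(f) = c · Σ_{i≥0} ‖D^s_{(i)} f‖²_{L²(ℝ⁺)}. In particular E^δ_s(f) is finite if and only if the gradient ∇^s_{dy} f = (D^s_{(i)} f)_{i≥0} belongs to L²(ℝ⁺, ℓ²). -/

import Mathlib

open MeasureTheory Set
open scoped ENNReal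

noncomputable section

/-- The dyadic interval `I^j_k = [k 2^{-j}, (k+1) 2^{-j})` of `ℝ⁺`. -/
def dyI (j : ℤ) (k : ℕ) : Set ℝ := Set.Ico ((k : ℝ) * 2 ^ (-j)) (((k : ℝ) + 1) * 2 ^ (-j))

/-- The family `D` of dyadic intervals of `ℝ⁺`. -/
def IsDyadic (I : Set ℝ) : Prop := ∃ (j : ℤ) (k : ℕ), I = dyI j k

/-- `I(x,y)`: the smallest dyadic interval containing both `x` and `y`. -/
def dyInt (x y : ℝ) : Set ℝ := ⋂₀ {I : Set ℝ | IsDyadic I ∧ x ∈ I ∧ y ∈ I}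

/-- The dyadic distance `δ(x,y) = |I(x,y)|`, with `δ(x,x) = 0`. -/
def dyDist (x y : ℝ) : ℝ := if x = y then 0 else (volume (dyInt x y)).toReal

/-- The `l`-th dyadic ancestor of a dyadic interval: the unique dyadic interval
containing it whose measure is `2^l` times larger. -/
def dyAncestor (l : ℕ) (I : Set ℝ) : Set ℝ :=
  ⋂₀ {J : Set ℝ | IsDyadic J ∧ I ⊆ J ∧ volume J = 2 ^ l * volume I}

/-- The butterfly of the interval `[a, b)`:
`B = (I⁺ × I⁻) ∪ (I⁻ × I⁺)` where `I⁻, I⁺` are the two halves. -/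
def bflyI (a b : ℝ) : Set (ℝ × ℝ) :=
  (Set.Ico ((a + b) / 2) b ×ˢ Set.Ico a ((a + b) / 2)) ∪
    (Set.Ico a ((a + b) / 2) ×ˢ Set.Ico ((a + b) / 2) b)

/-- The butterfly `B(I^j_k)`. -/
def bfly (j : ℤ) (k : ℕ) : Set (ℝ × ℝ) := bflyI ((k : ℝ) * 2 ^ (-j)) (((k : ℝ) + 1) * 2 ^ (-j))

/-- The butterfly of an interval given as a set. -/
def bflySet (I : Set ℝ) : Set (ℝ × ℝ) := bflyI (sInf I) (sSup I)

/-- `Γ_k = ⋃_{l ∈ ℤ} B(2^l · [k, k+1))`. -/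
def Gam (k : ℕ) : Set (ℝ × ℝ) := ⋃ l : ℤ, bflyI ((k : ℝ) * 2 ^ l) (((k : ℝ) + 1) * 2 ^ l)

/-- The basic Haar wavelet `h^0_0 = 1_{[0,1/2)} - 1_{[1/2,1)}`. -/
def haar0 (x : ℝ) : ℝ :=
  Set.indicator (Set.Ico (0 : ℝ) (1 / 2)) (fun _ => 1) x
    - Set.indicator (Set.Ico (1 / 2 : ℝ) 1) (fun _ => 1) x

/-- The Haar wavelet `h^j_k(x) = 2^{j/2} h^0_0(2^j x - k)`, supported in `I^j_k`. -/
def haar (j : ℤ) (k : ℕ) (x : ℝ) : ℝ := (2 : ℝ) ^ ((j : ℝ) / 2) * haar0 (2 ^ j * x - (k : ℝ))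

/-- The finite linear span of the Haar system. -/
def HaarSpan (f : ℝ → ℝ) : Prop :=
  ∃ (F : Finset (ℤ × ℕ)) (c : ℤ × ℕ → ℝ), f = fun x => ∑ p ∈ F, c p * haar p.1 p.2 x

/-- `Ω_m(x,y) = δ(x,y) Σ_{I ∈ D} m(I) h_I(x) h_I(y)`. -/
def Omega (m : Set ℝ → ℝ) (x y : ℝ) : ℝ :=
  dyDist x y * ∑' p : ℤ × ℕ, m (dyI p.1 p.2) * (haar p.1 p.2 x * haar p.1 p.2 y)

/-- The dyadic fractional Laplacian `(-Δ)^{s/2}_{dy} f = Σ_{h ∈ H} |I(h)|^{-s} ⟨f, h⟩ h`. -/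
def dyLap (s : ℝ) (f : ℝ → ℝ) (x : ℝ) : ℝ :=
  ∑' p : ℤ × ℕ,
    (volume (dyI p.1 p.2)).toReal ^ (-s) * (∫ y, f y * haar p.1 p.2 y) * haar p.1 p.2 x

/-- The partial dyadic derivative `D^s_{(i)} f = Σ_{j ∈ ℤ} 2^{sj} ⟨f, h^j_i⟩ h^j_i`. -/
def Dsi (s : ℝ) (i : ℕ) (f : ℝ → ℝ) (x : ℝ) : ℝ :=
  ∑' j : ℤ, (2 : ℝ) ^ (s * (j : ℝ)) * (∫ y, f y * haar j i y) * haar j i x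

/-- The Haar multiplier `T_{(i)} g = Σ_{j ∈ ℤ} ⟨g, h^j_i⟩ h^j_i`. -/
def Ti (i : ℕ) (g : ℝ → ℝ) (x : ℝ) : ℝ := ∑' j : ℤ, (∫ y, g y * haar j i y) * haar j i x

/-- The directional derivative `D^s_m f = Σ_{h ∈ H} m(h) |I(h)|^{-s} ⟨f, h⟩ h`. -/
def Dsm (s : ℝ) (m : ℤ × ℕ → ℝ) (f : ℝ → ℝ) (x : ℝ) : ℝ :=
  ∑' p : ℤ × ℕ,
    m p * ((volume (dyI p.1 p.2)).toReal ^ (-s) * (∫ y, f y * haar p.1 p.2 y)) * haar p.1 p.2 x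

/-- The Haar multiplier `T_m g = Σ_{h ∈ H} m(h) ⟨g, h⟩ h`. -/
def Tm (m : ℤ × ℕ → ℝ) (g : ℝ → ℝ) (x : ℝ) : ℝ :=
  ∑' p : ℤ × ℕ, m p * (∫ y, g y * haar p.1 p.2 y) * haar p.1 p.2 x

/-- The component kernels `K_{(i)}(x,y) = Σ_{j ∈ ℤ} h^j_i(x) h^j_i(y)`. -/
def Kker (i : ℕ) (x y : ℝ) : ℝ := ∑' j : ℤ, haar j i x * haar j i y

open Classical in
/-- The multiplier `m_i` with `m_i(I^j_k) = 1` if `k = i` and `0` otherwise. -/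
def mInd (i : ℕ) (I : Set ℝ) : ℝ := if ∃ j : ℤ, I = dyI j i then 1 else 0

/-- The dyadic energy form `E^δ_s(f)`. -/
def dyEnergy (s : ℝ) (f : ℝ → ℝ) : ℝ :=
  ∫ x in Set.Ici (0 : ℝ), ∫ y in Set.Ici (0 : ℝ), (f x - f y) ^ 2 * dyDist x y ^ (-(1 + 2 * s))

/-!
Off the diagonal, the quadrant `ℝ⁺ × ℝ⁺` is the disjoint union of the butterflies `B(I)`, and `δ`
equals `|I|` on `B(I)`. Splitting `I` into its halves gives
`∬_{B(I)} |f(x) - f(y)|² dx dy = |I| ∫_I f² - (∫_I f)² + |I| ⟨f, h_I⟩²`.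
On `I`, a finite Haar sum `f` is a constant, which the left-hand side does not see, plus the sum of
its terms with `J ⊆ I`, which has mean zero; so this integral equals
`|I| (∑_{J ⊆ I} ⟨f, h_J⟩² + ⟨f, h_I⟩²)`. Multiplying by `|I|^{-(1+2s)}` and summing over `I`, each
`J` collects a geometric series over its ancestors plus one more term, in total
`((1 - 2^{-2s})⁻¹ + 1) |J|^{-2s} ⟨f, h_J⟩²`.
-/

lemma two_zpow_neg_eq_two_mul (j : ℤ) : (2 : ℝ) ^ (-j) = 2 * 2 ^ (-(j + 1)) := by
  rw [neg_add, ← sub_eq_add_neg, zpow_sub_one₀ two_ne_zero]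
  ring

lemma two_rpow_half_sq (j : ℤ) : ((2 : ℝ) ^ ((j : ℝ) / 2)) ^ 2 = 2 ^ j := by
  rw [← Real.rpow_mul_natCast two_pos.le, Nat.cast_ofNat, div_mul_cancel₀ _ two_ne_zero,
    Real.rpow_intCast]

lemma two_zpow_neg_rpow_neg (j : ℤ) (t : ℝ) : ((2 : ℝ) ^ (-j)) ^ (-t) = 2 ^ (t * j) := by
  rw [← Real.rpow_intCast, ← Real.rpow_mul two_pos.le]
  push_cast
  ring_nf

section ProdSubSq

variable {α β : Type*} [MeasurableSpace α] [MeasurableSpace β] {μ : Measure α} {ν : Measure β}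
  [IsFiniteMeasure μ] [IsFiniteMeasure ν] {u : α → ℝ} {v : β → ℝ}

lemma integrable_prod_sub_sq (hu : MemLp u 2 μ) (hv : MemLp v 2 ν) :
    Integrable (fun z : α × β => (u z.1 - v z.2) ^ 2) (μ.prod ν) :=
  ((hu.comp_fst ν).sub (hv.comp_snd μ)).integrable_sq

lemma integral_prod_sub_sq (hu : MemLp u 2 μ) (hv : MemLp v 2 ν) :
    ∫ z : α × β, (u z.1 - v z.2) ^ 2 ∂μ.prod ν =
      ν.real univ * ∫ x, u x ^ 2 ∂μ + μ.real univ * ∫ y, v y ^ 2 ∂ν -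
        2 * ((∫ x, u x ∂μ) * ∫ y, v y ∂ν) := by
  have hu_sq : Integrable (fun z : α × β => u z.1 ^ 2) (μ.prod ν) :=
    (hu.comp_fst ν).integrable_sq
  have hv_sq : Integrable (fun z : α × β => v z.2 ^ 2) (μ.prod ν) :=
    (hv.comp_snd μ).integrable_sq
  have hsum_sq : Integrable (fun z : α × β => u z.1 ^ 2 + v z.2 ^ 2) (μ.prod ν) :=
    hu_sq.add hv_sq
  have huv : Integrable (fun z : α × β => u z.1 * v z.2) (μ.prod ν) :=
    (hu.integrable one_le_two).mul_prod (hv.integrable one_le_two)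
  have hexpand (z : α × β) :
      (u z.1 - v z.2) ^ 2 = u z.1 ^ 2 + v z.2 ^ 2 - 2 * (u z.1 * v z.2) := by ring
  simp only [hexpand]
  rw [integral_sub hsum_sq (huv.const_mul 2), integral_add hu_sq hv_sq,
    integral_const_mul, integral_prod_mul, integral_fun_fst fun x => u x ^ 2,
    integral_fun_snd fun y => v y ^ 2, smul_eq_mul, smul_eq_mul]

end ProdSubSq

/-- The index `k` of the dyadic interval `I^j_k` containing `x ≥ 0`. -/
def dyIndex (j : ℤ) (x : ℝ) : ℕ := ⌊(2 : ℝ) ^ j * x⌋₊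

lemma mem_dyI_iff_zpow_mul {j : ℤ} {k : ℕ} {x : ℝ} :
    x ∈ dyI j k ↔ (k : ℝ) ≤ 2 ^ j * x ∧ 2 ^ j * x < k + 1 := by
  have h : (0 : ℝ) < 2 ^ j := by positivity
  rw [dyI, mem_Ico, zpow_neg, ← div_eq_mul_inv, ← div_eq_mul_inv, div_le_iff₀ h,
    lt_div_iff₀ h, mul_comm x]

lemma mem_dyI {j : ℤ} {k : ℕ} {x : ℝ} : x ∈ dyI j k ↔ 0 ≤ x ∧ dyIndex j x = k := by
  have h : (0 : ℝ) < 2 ^ j := by positivity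
  rw [mem_dyI_iff_zpow_mul]
  constructor
  · intro hk
    have hx : 0 ≤ 2 ^ j * x := (Nat.cast_nonneg k).trans hk.1
    exact ⟨nonneg_of_mul_nonneg_right hx h, (Nat.floor_eq_iff hx).2 hk⟩
  · rintro ⟨hx, hk⟩
    exact (Nat.floor_eq_iff (by positivity)).1 hk

lemma dyIndex_sub_natCast (j : ℤ) (l : ℕ) (x : ℝ) :
    dyIndex (j - l) x = dyIndex j x / 2 ^ l := by
  rw [dyIndex, dyIndex, ← Nat.floor_div_natCast, zpow_sub₀ two_ne_zero, zpow_natCast]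
  push_cast
  rw [div_mul_eq_mul_div]

lemma dyIndex_eq_div_two (j : ℤ) (x : ℝ) : dyIndex j x = dyIndex (j + 1) x / 2 := by
  simpa using dyIndex_sub_natCast (j + 1) 1 x

lemma dyIndex_eq_of_le {i j : ℤ} (hij : i ≤ j) {x y : ℝ} (h : dyIndex j x = dyIndex j y) :
    dyIndex i x = dyIndex i y := by
  obtain ⟨l, rfl⟩ : ∃ l : ℕ, i = j - l := ⟨(j - i).toNat, by omega⟩
  rw [dyIndex_sub_natCast, dyIndex_sub_natCast, h]

lemma natCast_mul_zpow_neg_mem_dyI (j : ℤ) (k : ℕ) : (k : ℝ) * 2 ^ (-j) ∈ dyI j k :=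
  left_mem_Ico.2 (by gcongr; linarith)

lemma measurableSet_dyI (j : ℤ) (k : ℕ) : MeasurableSet (dyI j k) := measurableSet_Ico

lemma volume_dyI (j : ℤ) (k : ℕ) : volume (dyI j k) = ENNReal.ofReal (2 ^ (-j)) := by
  rw [dyI, Real.volume_Ico, ← sub_mul, add_sub_cancel_left, one_mul]

lemma volume_dyI_ne_top (j : ℤ) (k : ℕ) : volume (dyI j k) ≠ ⊤ := measure_Ico_lt_top.ne

lemma volume_real_dyI (j : ℤ) (k : ℕ) : volume.real (dyI j k) = 2 ^ (-j) := by
  rw [Measure.real, volume_dyI, ENNReal.toReal_ofReal (by positivity)]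

instance isFiniteMeasure_restrict_dyI (j : ℤ) (k : ℕ) :
    IsFiniteMeasure (volume.restrict (dyI j k)) :=
  isFiniteMeasure_restrict.2 (volume_dyI_ne_top j k)

lemma dyI_subset_of_le_of_mem {i j : ℤ} (hij : i ≤ j) {m k : ℕ} {x : ℝ}
    (hi : x ∈ dyI i m) (hj : x ∈ dyI j k) : dyI j k ⊆ dyI i m := by
  intro y hy
  rw [mem_dyI] at *
  exact ⟨hy.1, hi.2 ▸ dyIndex_eq_of_le hij (hy.2.trans hj.2.symm)⟩

lemma dyI_subset_dyI_iff {p q : ℤ × ℕ} :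
    dyI q.1 q.2 ⊆ dyI p.1 p.2 ↔ ∃ l : ℕ, p = (q.1 - l, q.2 / 2 ^ l) := by
  constructor
  · intro h
    have hvol := measureReal_mono (μ := volume) h (volume_dyI_ne_top _ _)
    rw [volume_real_dyI, volume_real_dyI, zpow_le_zpow_iff_right₀ one_lt_two] at hvol
    have hq := natCast_mul_zpow_neg_mem_dyI q.1 q.2
    have hl : p.1 = q.1 - (q.1 - p.1).toNat := by omega
    refine ⟨_, Prod.ext hl ?_⟩
    rw [← (mem_dyI.1 (h hq)).2, hl, dyIndex_sub_natCast, (mem_dyI.1 hq).2, ← hl]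
  · rintro ⟨l, rfl⟩ x hx
    rw [mem_dyI] at *
    exact ⟨hx.1, by rw [dyIndex_sub_natCast, hx.2]⟩

lemma dyI_inj {p q : ℤ × ℕ} : dyI p.1 p.2 = dyI q.1 q.2 ↔ p = q := by
  refine ⟨fun h => ?_, fun h => h ▸ rfl⟩
  obtain ⟨l, hl⟩ := dyI_subset_dyI_iff.1 h.ge
  obtain ⟨m, hm⟩ := dyI_subset_dyI_iff.1 h.le
  obtain rfl : l = 0 := by
    have := congrArg Prod.fst hl
    have := congrArg Prod.fst hm
    dsimp only at *
    omega
  simpa using hl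

lemma dyI_eq_union_halves (j : ℤ) (k : ℕ) :
    dyI j k = dyI (j + 1) (2 * k) ∪ dyI (j + 1) (2 * k + 1) := by
  ext x
  simp only [mem_union, mem_dyI, dyIndex_eq_div_two j x, ← and_or_left]
  exact and_congr_right fun _ => by omega

lemma disjoint_dyI_halves (j : ℤ) (k : ℕ) :
    Disjoint (dyI (j + 1) (2 * k)) (dyI (j + 1) (2 * k + 1)) := by
  rw [Set.disjoint_left]
  intro x hx hx'
  rw [mem_dyI] at hx hx'
  omega

lemma dyI_half_subset (j : ℤ) (k : ℕ) :
    dyI (j + 1) (2 * k) ⊆ dyI j k ∧ dyI (j + 1) (2 * k + 1) ⊆ dyI j k := by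
  rw [dyI_eq_union_halves j k]
  exact ⟨subset_union_left, subset_union_right⟩

lemma bfly_eq_union_prod_halves (j : ℤ) (k : ℕ) :
    bfly j k = dyI (j + 1) (2 * k + 1) ×ˢ dyI (j + 1) (2 * k) ∪
      dyI (j + 1) (2 * k) ×ˢ dyI (j + 1) (2 * k + 1) := by
  have hj := two_zpow_neg_eq_two_mul j
  have hleft : (k : ℝ) * 2 ^ (-j) = (2 * k : ℕ) * 2 ^ (-(j + 1)) := by push_cast; rw [hj]; ring
  have hmid : ((k : ℝ) * 2 ^ (-j) + (k + 1) * 2 ^ (-j)) / 2 = (2 * k + 1 : ℕ) * 2 ^ (-(j + 1)) := by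
    push_cast; rw [hj]; ring
  have hright : ((k : ℝ) + 1) * 2 ^ (-j) = ((2 * k + 1 : ℕ) + 1) * 2 ^ (-(j + 1)) := by
    push_cast; rw [hj]; ring
  rw [bfly, bflyI, hmid, hleft, hright]
  simp only [dyI, Nat.cast_add, Nat.cast_one]

lemma mem_bfly {j : ℤ} {k : ℕ} {z : ℝ × ℝ} :
    z ∈ bfly j k ↔ z.1 ∈ dyI j k ∧ z.2 ∈ dyI j k ∧ dyIndex (j + 1) z.1 ≠ dyIndex (j + 1) z.2 := by
  simp only [bfly_eq_union_prod_halves, mem_union, mem_prod, mem_dyI, dyIndex_eq_div_two j]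
  constructor
  · rintro (⟨⟨hx, hkx⟩, hy, hky⟩ | ⟨⟨hx, hkx⟩, hy, hky⟩) <;>
      exact ⟨⟨hx, by omega⟩, ⟨hy, by omega⟩, by omega⟩
  · rintro ⟨⟨hx, hkx⟩, ⟨hy, hky⟩, hne⟩
    simp only [hx, hy, true_and]
    omega

lemma measurableSet_bfly (j : ℤ) (k : ℕ) : MeasurableSet (bfly j k) := by
  rw [bfly_eq_union_prod_halves]
  exact ((measurableSet_dyI _ _).prod (measurableSet_dyI _ _)).union
    ((measurableSet_dyI _ _).prod (measurableSet_dyI _ _))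

lemma pairwise_disjoint_bfly :
    Pairwise (Function.onFun Disjoint fun p : ℤ × ℕ => bfly p.1 p.2) := by
  have key {p q : ℤ × ℕ} {z : ℝ × ℝ} (hp : z ∈ bfly p.1 p.2) (hq : z ∈ bfly q.1 q.2) :
      p.1 ≤ q.1 := by
    rw [mem_bfly, mem_dyI, mem_dyI] at *
    by_contra! h
    exact hq.2.2 (dyIndex_eq_of_le (by omega) (hp.1.2.trans hp.2.1.2.symm))
  intro p q hpq
  rw [Function.onFun, Set.disjoint_left]
  intro z hp hq
  have hlevel : p.1 = q.1 := (key hp hq).antisymm (key hq hp)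
  refine hpq (Prod.ext hlevel ?_)
  rw [← (mem_dyI.1 (mem_bfly.1 hp).1).2, ← (mem_dyI.1 (mem_bfly.1 hq).1).2, hlevel]

lemma exists_dyIndex_eq (x y : ℝ) :
    ∃ j : ℤ, dyIndex j x = dyIndex j y := by
  obtain ⟨n, hn⟩ := pow_unbounded_of_one_lt (max x y) (one_lt_two (α := ℝ))
  have hzero {z : ℝ} (hz : z < 2 ^ n) : dyIndex (-n) z = 0 := by
    rw [dyIndex, Nat.floor_eq_zero, zpow_neg, zpow_natCast, inv_mul_lt_iff₀ (by positivity)]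
    simpa using hz
  exact ⟨-n, by rw [hzero (lt_of_le_of_lt (le_max_left x y) hn),
    hzero (lt_of_le_of_lt (le_max_right x y) hn)]⟩

lemma exists_forall_dyIndex_eq_imp_le {x y : ℝ} (hx : 0 ≤ x) (hy : 0 ≤ y) (hxy : x ≠ y) :
    ∃ b : ℤ, ∀ j : ℤ, dyIndex j x = dyIndex j y → j ≤ b := by
  obtain ⟨n, hn⟩ := pow_unbounded_of_one_lt (1 / |x - y|) (one_lt_two (α := ℝ))
  refine ⟨n, fun j hj => ?_⟩
  have hxI := mem_dyI_iff_zpow_mul.1 (mem_dyI.2 ⟨hx, hj⟩)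
  have hyI := mem_dyI_iff_zpow_mul.1 (mem_dyI.2 ⟨hy, rfl⟩ : y ∈ dyI j (dyIndex j y))
  have hdist : 2 ^ j * |x - y| < 1 := by
    rw [← abs_of_pos (zpow_pos two_pos j : (0 : ℝ) < 2 ^ j), ← abs_mul, mul_sub, abs_sub_lt_iff]
    constructor <;> linarith
  have hlt : (2 : ℝ) ^ j < 2 ^ (n : ℤ) := by
    rw [zpow_natCast]
    exact ((lt_div_iff₀ (abs_pos.2 (sub_ne_zero.2 hxy))).2 hdist).trans hn
  exact ((zpow_lt_zpow_iff_right₀ one_lt_two).1 hlt).le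

lemma iUnion_bfly : ⋃ p : ℤ × ℕ, bfly p.1 p.2 = (Ici 0 ×ˢ Ici 0) \ diagonal ℝ := by
  ext ⟨x, y⟩
  simp only [mem_iUnion, mem_bfly, mem_dyI, mem_sdiff, mem_prod, mem_Ici, mem_diagonal_iff]
  constructor
  · rintro ⟨p, ⟨hx, -⟩, ⟨hy, -⟩, hne⟩
    exact ⟨⟨hx, hy⟩, fun h => hne (h ▸ rfl)⟩
  · rintro ⟨⟨hx, hy⟩, hxy⟩
    obtain ⟨j, hj, hmax⟩ := Int.exists_greatest_of_bdd
      (exists_forall_dyIndex_eq_imp_le hx hy hxy) (exists_dyIndex_eq x y)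
    exact ⟨(j, dyIndex j y), ⟨hx, hj⟩, ⟨hy, rfl⟩, fun h => by linarith [hmax _ h]⟩

lemma dyDist_of_mem_bfly {j : ℤ} {k : ℕ} {z : ℝ × ℝ} (hz : z ∈ bfly j k) :
    dyDist z.1 z.2 = 2 ^ (-j) := by
  obtain ⟨h₁, h₂, hne⟩ := mem_bfly.1 hz
  have hInt : dyInt z.1 z.2 = dyI j k := by
    have hmem : IsDyadic (dyI j k) ∧ z.1 ∈ dyI j k ∧ z.2 ∈ dyI j k := ⟨⟨j, k, rfl⟩, h₁, h₂⟩
    refine (sInter_subset_of_mem hmem).antisymm (subset_sInter ?_)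
    rintro _ ⟨⟨i, m, rfl⟩, h₁', h₂'⟩
    refine dyI_subset_of_le_of_mem (le_of_not_gt fun hij => hne ?_) h₁' h₁
    exact dyIndex_eq_of_le (by omega) ((mem_dyI.1 h₁').2.trans (mem_dyI.1 h₂').2.symm)
  rw [dyDist, if_neg fun h : z.1 = z.2 => hne (h ▸ rfl), hInt, ← measureReal_def, volume_real_dyI]

lemma haar_eq_indicator_sub (j : ℤ) (k : ℕ) (x : ℝ) :
    haar j k x = (2 : ℝ) ^ ((j : ℝ) / 2) *
      ((dyI (j + 1) (2 * k)).indicator (fun _ => 1) x -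
        (dyI (j + 1) (2 * k + 1)).indicator (fun _ => 1) x) := by
  have hscale : (2 : ℝ) ^ (j + 1) * x = 2 * (2 ^ j * x) := by
    rw [zpow_add_one₀ two_ne_zero]; ring
  have hleft : 2 ^ j * x - (k : ℝ) ∈ Ico (0 : ℝ) (1 / 2) ↔ x ∈ dyI (j + 1) (2 * k) := by
    rw [mem_dyI_iff_zpow_mul, hscale, mem_Ico]
    push_cast
    constructor <;> rintro ⟨_, _⟩ <;> constructor <;> linarith
  have hright : 2 ^ j * x - (k : ℝ) ∈ Ico (1 / 2 : ℝ) 1 ↔ x ∈ dyI (j + 1) (2 * k + 1) := by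
    rw [mem_dyI_iff_zpow_mul, hscale, mem_Ico]
    push_cast
    constructor <;> rintro ⟨_, _⟩ <;> constructor <;> linarith
  classical
  simp only [haar, haar0, indicator_apply, hleft, hright]

lemma haar_eq_zero_of_notMem {j : ℤ} {k : ℕ} {x : ℝ} (hx : x ∉ dyI j k) : haar j k x = 0 := by
  rw [dyI_eq_union_halves, mem_union, not_or] at hx
  rw [haar_eq_indicator_sub, indicator_of_notMem hx.1, indicator_of_notMem hx.2, sub_zero,
    mul_zero]

lemma haar_sq (j : ℤ) (k : ℕ) (x : ℝ) :
    haar j k x ^ 2 = (dyI j k).indicator (fun _ => (2 : ℝ) ^ j) x := by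
  by_cases hx : x ∈ dyI j k
  · rw [indicator_of_mem hx, haar_eq_indicator_sub, mul_pow, two_rpow_half_sq]
    rw [dyI_eq_union_halves] at hx
    rcases hx with hx | hx
    · simp [hx, (disjoint_dyI_halves j k).notMem_of_mem_left hx]
    · simp [hx, (disjoint_dyI_halves j k).notMem_of_mem_right hx]
  · rw [haar_eq_zero_of_notMem hx, indicator_of_notMem hx, sq, zero_mul]

lemma haar_eq_of_not_dyI_subset {p q : ℤ × ℕ} (hqp : ¬ dyI q.1 q.2 ⊆ dyI p.1 p.2) {x y : ℝ}
    (hx : x ∈ dyI p.1 p.2) (hy : y ∈ dyI p.1 p.2) : haar q.1 q.2 x = haar q.1 q.2 y := by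
  -- Either the two intervals are disjoint or `I_p` lies in one of the halves of `I_q`.
  rcases le_or_gt p.1 q.1 with hle | hlt
  · have hdisj {z : ℝ} (hz : z ∈ dyI p.1 p.2) : z ∉ dyI q.1 q.2 :=
      fun hzq => hqp (dyI_subset_of_le_of_mem hle hz hzq)
    rw [haar_eq_zero_of_notMem (hdisj hx), haar_eq_zero_of_notMem (hdisj hy)]
  · have hhalf (m : ℕ) : x ∈ dyI (q.1 + 1) m ↔ y ∈ dyI (q.1 + 1) m :=
      ⟨fun h => dyI_subset_of_le_of_mem hlt h hx hy, fun h => dyI_subset_of_le_of_mem hlt h hy hx⟩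
    classical
    simp only [haar_eq_indicator_sub, indicator_apply, hhalf]

lemma memLp_haar (r : ℝ≥0∞) (j : ℤ) (k : ℕ) : MemLp (haar j k) r := by
  have hind (i : ℤ) (m : ℕ) : MemLp ((dyI i m).indicator fun _ => (1 : ℝ)) r :=
    memLp_indicator_const r (measurableSet_dyI i m) 1 (Or.inr (volume_dyI_ne_top i m))
  rw [funext (haar_eq_indicator_sub j k)]
  exact ((hind _ _).sub (hind _ _)).const_mul _

lemma integral_mul_haar {g : ℝ → ℝ} {j : ℤ} {k : ℕ} (hg : IntegrableOn g (dyI j k)) :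
    ∫ x, g x * haar j k x = (2 : ℝ) ^ ((j : ℝ) / 2) *
      ((∫ x in dyI (j + 1) (2 * k), g x) - ∫ x in dyI (j + 1) (2 * k + 1), g x) := by
  have hmul (x : ℝ) : g x * haar j k x = (2 : ℝ) ^ ((j : ℝ) / 2) *
      ((dyI (j + 1) (2 * k)).indicator g x - (dyI (j + 1) (2 * k + 1)).indicator g x) := by
    classical
    simp only [haar_eq_indicator_sub, indicator_apply]
    split_ifs <;> ring
  have hhalves := dyI_half_subset j k
  simp only [hmul]
  rw [integral_const_mul, integral_sub
    ((integrable_indicator_iff (measurableSet_dyI _ _)).2 (hg.mono_set hhalves.1))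
    ((integrable_indicator_iff (measurableSet_dyI _ _)).2 (hg.mono_set hhalves.2)),
    integral_indicator (measurableSet_dyI _ _), integral_indicator (measurableSet_dyI _ _)]

lemma integral_haar (j : ℤ) (k : ℕ) : ∫ x, haar j k x = 0 := by
  have h := integral_mul_haar (g := fun _ => 1) (j := j) (k := k)
    (integrableOn_const (volume_dyI_ne_top j k))
  simpa [volume_real_dyI] using h

lemma integral_haar_sq (j : ℤ) (k : ℕ) : ∫ x, haar j k x ^ 2 = 1 := by
  simp only [haar_sq]
  rw [integral_indicator_const _ (measurableSet_dyI j k), volume_real_dyI, smul_eq_mul,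
    ← zpow_add₀ two_ne_zero, neg_add_cancel, zpow_zero]

lemma integral_haar_mul_haar_of_not_dyI_subset {p q : ℤ × ℕ}
    (hqp : ¬ dyI q.1 q.2 ⊆ dyI p.1 p.2) :
    ∫ x, haar p.1 p.2 x * haar q.1 q.2 x = 0 := by
  have hconst (x : ℝ) : haar p.1 p.2 x * haar q.1 q.2 x =
      haar p.1 p.2 x * haar q.1 q.2 (p.2 * 2 ^ (-p.1)) := by
    by_cases hx : x ∈ dyI p.1 p.2
    · rw [haar_eq_of_not_dyI_subset hqp hx (natCast_mul_zpow_neg_mem_dyI _ _)]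
    · rw [haar_eq_zero_of_notMem hx, zero_mul, zero_mul]
  simp only [hconst]
  rw [integral_mul_const, integral_haar, zero_mul]

lemma integral_haar_mul_haar (p q : ℤ × ℕ) :
    ∫ x, haar p.1 p.2 x * haar q.1 q.2 x = if p = q then 1 else 0 := by
  split_ifs with hpq
  · simp only [hpq, ← sq, integral_haar_sq]
  · by_cases hqp : dyI q.1 q.2 ⊆ dyI p.1 p.2
    · simp only [mul_comm (haar p.1 p.2 _)]
      exact integral_haar_mul_haar_of_not_dyI_subset
        fun hpq' => hpq (dyI_inj.1 (hpq'.antisymm hqp))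
    · exact integral_haar_mul_haar_of_not_dyI_subset hqp

/-- The finite Haar sum `Σ_{p ∈ F} c_p h_p`; `HaarSpan` consists of exactly these functions. -/
def haarSum (F : Finset (ℤ × ℕ)) (c : ℤ × ℕ → ℝ) (x : ℝ) : ℝ := ∑ p ∈ F, c p * haar p.1 p.2 x

section HaarSum

variable (F : Finset (ℤ × ℕ)) (c : ℤ × ℕ → ℝ)

lemma memLp_haarSum (r : ℝ≥0∞) : MemLp (haarSum F c) r :=
  memLp_finsetSum F fun p _ => (memLp_haar r p.1 p.2).const_mul (c p)

lemma integral_haarSum : ∫ x, haarSum F c x = 0 := by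
  simp only [haarSum]
  rw [integral_finsetSum F fun p _ =>
    (memLp_one_iff_integrable.1 (memLp_haar 1 p.1 p.2)).const_mul (c p)]
  simp only [integral_const_mul, integral_haar, mul_zero, Finset.sum_const_zero]

lemma integral_haarSum_mul_haar (q : ℤ × ℕ) :
    ∫ x, haarSum F c x * haar q.1 q.2 x = if q ∈ F then c q else 0 := by
  have hint (p : ℤ × ℕ) : Integrable fun x => c p * (haar p.1 p.2 x * haar q.1 q.2 x) :=
    ((memLp_haar 2 p.1 p.2).integrable_mul (memLp_haar 2 q.1 q.2)).const_mul (c p)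
  simp only [haarSum, Finset.sum_mul, mul_assoc]
  rw [integral_finsetSum F fun p _ => hint p]
  simp only [integral_const_mul, integral_haar_mul_haar, mul_ite, mul_one, mul_zero,
    Finset.sum_ite_eq']

lemma integral_haarSum_sq : ∫ x, haarSum F c x ^ 2 = ∑ p ∈ F, c p ^ 2 := by
  have hint (p : ℤ × ℕ) : Integrable fun x => c p * (haarSum F c x * haar p.1 p.2 x) :=
    ((memLp_haarSum F c 2).integrable_mul (memLp_haar 2 p.1 p.2)).const_mul (c p)
  have hexpand (x : ℝ) :
      haarSum F c x ^ 2 = ∑ p ∈ F, c p * (haarSum F c x * haar p.1 p.2 x) := by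
    rw [sq]
    nth_rw 2 [haarSum]
    rw [Finset.mul_sum]
    exact Finset.sum_congr rfl fun p _ => mul_left_comm _ _ _
  simp only [hexpand]
  rw [integral_finsetSum F fun p _ => hint p]
  refine Finset.sum_congr rfl fun p hp => ?_
  rw [integral_const_mul, integral_haarSum_mul_haar, if_pos hp, sq]

lemma Dsi_haarSum (s : ℝ) (i : ℕ) :
    Dsi s i (haarSum F c) = haarSum {p ∈ F | p.2 = i} fun p => 2 ^ (s * p.1) * c p := by
  ext x
  have hinj : InjOn (fun j : ℤ => (j, i)) ((fun j => (j, i)) ⁻¹' F) :=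
    fun _ _ _ _ h => congrArg Prod.fst h
  have hsnd (p : ℤ × ℕ) : p ∈ range (fun j : ℤ => (j, i)) ↔ p.2 = i :=
    ⟨fun ⟨_, hj⟩ => hj ▸ rfl, fun hp => ⟨p.1, hp ▸ rfl⟩⟩
  simp only [Dsi, integral_haarSum_mul_haar F c (_, i)]
  rw [tsum_eq_sum (s := F.preimage _ hinj) fun j hj => by
    rw [if_neg (mt Finset.mem_preimage.2 hj), mul_zero, zero_mul]]
  classical
  calc ∑ j ∈ F.preimage _ hinj,
        (2 : ℝ) ^ (s * j) * (if (j, i) ∈ F then c (j, i) else 0) * haar j i x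
      = ∑ j ∈ F.preimage _ hinj, (2 : ℝ) ^ (s * j) * c (j, i) * haar j i x :=
        Finset.sum_congr rfl fun j hj => by rw [if_pos (Finset.mem_preimage.1 hj)]
    _ = ∑ p ∈ F with p ∈ range fun j : ℤ => (j, i), (2 : ℝ) ^ (s * p.1) * c p * haar p.1 p.2 x :=
        Finset.sum_preimage' _ F hinj fun p => (2 : ℝ) ^ (s * p.1) * c p * haar p.1 p.2 x
    _ = haarSum {p ∈ F | p.2 = i} (fun p => 2 ^ (s * p.1) * c p) x := by
        simp only [hsnd, haarSum]

lemma hasSum_integral_Dsi_haarSum_sq (s : ℝ) :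
    HasSum (fun i => ∫ x, Dsi s i (haarSum F c) x ^ 2) (∑ p ∈ F, 2 ^ (2 * s * p.1) * c p ^ 2) := by
  have hsq (p : ℤ × ℕ) : ((2 : ℝ) ^ (s * p.1) * c p) ^ 2 = 2 ^ (2 * s * p.1) * c p ^ 2 := by
    rw [mul_pow, ← Real.rpow_mul_natCast two_pos.le]
    push_cast
    ring_nf
  simp only [Dsi_haarSum, integral_haarSum_sq, Finset.sum_filter, hsq, eq_comm (a := Prod.snd _)]
  exact hasSum_sum fun p _ => hasSum_ite_eq p.2 _

lemma tsum_lintegral_Dsi_haarSum_sq_lt_top (s : ℝ) :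
    ∑' i, ∫⁻ x, ENNReal.ofReal (Dsi s i (haarSum F c) x ^ 2) < ⊤ := by
  have hint (i : ℕ) : Integrable fun x => Dsi s i (haarSum F c) x ^ 2 := by
    rw [Dsi_haarSum]
    exact (memLp_haarSum _ _ 2).integrable_sq
  simp only [← ofReal_integral_eq_lintegral_ofReal (hint _) (.of_forall fun _ => sq_nonneg _)]
  exact (hasSum_integral_Dsi_haarSum_sq F c s).summable.tsum_ofReal_lt_top

end HaarSum

section Butterfly

variable {g : ℝ → ℝ} {j : ℤ} {k : ℕ}

lemma integrableOn_bfly_sub_sq (hg : MemLp g 2 (volume.restrict (dyI j k))) :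
    IntegrableOn (fun z : ℝ × ℝ => (g z.1 - g z.2) ^ 2) (bfly j k) := by
  have hprod : IntegrableOn (fun z : ℝ × ℝ => (g z.1 - g z.2) ^ 2) (dyI j k ×ˢ dyI j k) := by
    rw [IntegrableOn, Measure.volume_eq_prod, ← Measure.prod_restrict]
    exact integrable_prod_sub_sq hg hg
  exact hprod.mono_set fun z hz => ⟨(mem_bfly.1 hz).1, (mem_bfly.1 hz).2.1⟩

lemma setIntegral_bfly_sub_sq (hg : MemLp g 2 (volume.restrict (dyI j k))) :
    ∫ z in bfly j k, (g z.1 - g z.2) ^ 2 =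
      2 ^ (-j) * (∫ x in dyI j k, g x ^ 2) - (∫ x in dyI j k, g x) ^ 2 +
        2 ^ (-j) * (∫ x, g x * haar j k x) ^ 2 := by
  have hleft := hg.mono_measure (Measure.restrict_mono_set volume (dyI_half_subset j k).1)
  have hright := hg.mono_measure (Measure.restrict_mono_set volume (dyI_half_subset j k).2)
  have hsplit {φ : ℝ → ℝ} (hφ : IntegrableOn φ (dyI j k)) : ∫ x in dyI j k, φ x =
      (∫ x in dyI (j + 1) (2 * k), φ x) + ∫ x in dyI (j + 1) (2 * k + 1), φ x := by
    rw [dyI_eq_union_halves, setIntegral_union (disjoint_dyI_halves j k) (measurableSet_dyI _ _)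
      (hφ.mono_set (dyI_half_subset j k).1) (hφ.mono_set (dyI_half_subset j k).2)]
  have hg_int : IntegrableOn g (dyI j k) := hg.integrable one_le_two
  have hbfly := integrableOn_bfly_sub_sq hg
  have hunit : (2 : ℝ) ^ (-j) * 2 ^ j = 1 := by
    rw [← zpow_add₀ two_ne_zero, neg_add_cancel, zpow_zero]
  rw [bfly_eq_union_prod_halves, integrableOn_union] at hbfly
  rw [bfly_eq_union_prod_halves, setIntegral_union
    (disjoint_prod.2 (Or.inl (disjoint_dyI_halves j k).symm))
    ((measurableSet_dyI _ _).prod (measurableSet_dyI _ _)) hbfly.1 hbfly.2,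
    Measure.volume_eq_prod, ← Measure.prod_restrict, ← Measure.prod_restrict,
    integral_prod_sub_sq hright hleft, integral_prod_sub_sq hleft hright]
  simp only [measureReal_restrict_apply_univ, volume_real_dyI]
  rw [hsplit hg.integrable_sq, hsplit hg_int, integral_mul_haar hg_int, mul_pow,
    two_rpow_half_sq,
    ← mul_assoc _ (2 ^ j), hunit, two_zpow_neg_eq_two_mul j]
  ring

end Butterfly

open scoped Classical in
lemma exists_haarSum_eq_haarSum_filter_add_const (F : Finset (ℤ × ℕ)) (c : ℤ × ℕ → ℝ)
    (p : ℤ × ℕ) : ∃ a : ℝ, ∀ x ∈ dyI p.1 p.2,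
      haarSum F c x = haarSum {q ∈ F | dyI q.1 q.2 ⊆ dyI p.1 p.2} c x + a := by
  refine ⟨haarSum {q ∈ F | ¬ dyI q.1 q.2 ⊆ dyI p.1 p.2} c (p.2 * 2 ^ (-p.1)), fun x hx => ?_⟩
  rw [haarSum, ← Finset.sum_filter_add_sum_filter_not F fun q => dyI q.1 q.2 ⊆ dyI p.1 p.2]
  refine congrArg₂ _ rfl (Finset.sum_congr rfl fun q hq => ?_)
  rw [haar_eq_of_not_dyI_subset (Finset.mem_filter.1 hq).2 hx (natCast_mul_zpow_neg_mem_dyI _ _)]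

lemma haarSum_eq_zero_of_notMem {F : Finset (ℤ × ℕ)} (c : ℤ × ℕ → ℝ) {p : ℤ × ℕ}
    (hF : ∀ q ∈ F, dyI q.1 q.2 ⊆ dyI p.1 p.2) {x : ℝ} (hx : x ∉ dyI p.1 p.2) :
    haarSum F c x = 0 :=
  Finset.sum_eq_zero fun q hq => by
    rw [haar_eq_zero_of_notMem fun hxq => hx (hF q hq hxq), mul_zero]

open scoped Classical in
lemma setIntegral_bfly_haarSum_sub_sq (F : Finset (ℤ × ℕ)) (c : ℤ × ℕ → ℝ) (p : ℤ × ℕ) :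
    ∫ z in bfly p.1 p.2, (haarSum F c z.1 - haarSum F c z.2) ^ 2 =
      2 ^ (-p.1) * ((∑ q ∈ F, if dyI q.1 q.2 ⊆ dyI p.1 p.2 then c q ^ 2 else 0) +
        if p ∈ F then c p ^ 2 else 0) := by
  obtain ⟨a, ha⟩ := exists_haarSum_eq_haarSum_filter_add_const F c p
  set G : Finset (ℤ × ℕ) := {q ∈ F | dyI q.1 q.2 ⊆ dyI p.1 p.2} with hG
  have hsupp {x : ℝ} (hx : x ∉ dyI p.1 p.2) : haarSum G c x = 0 :=
    haarSum_eq_zero_of_notMem c (fun q hq => (Finset.mem_filter.1 hq).2) hx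
  have hmean : ∫ x in dyI p.1 p.2, haarSum G c x = 0 := by
    rw [setIntegral_eq_integral_of_forall_compl_eq_zero fun x hx => hsupp hx, integral_haarSum]
  have hnorm : ∫ x in dyI p.1 p.2, haarSum G c x ^ 2 = ∑ q ∈ G, c q ^ 2 := by
    rw [setIntegral_eq_integral_of_forall_compl_eq_zero fun x hx => by
      rw [hsupp hx, sq, zero_mul], integral_haarSum_sq]
  have hp : p ∈ G ↔ p ∈ F := by rw [hG, Finset.mem_filter, and_iff_left Subset.rfl]
  calc ∫ z in bfly p.1 p.2, (haarSum F c z.1 - haarSum F c z.2) ^ 2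
      = ∫ z in bfly p.1 p.2, (haarSum G c z.1 - haarSum G c z.2) ^ 2 :=
        setIntegral_congr_fun (measurableSet_bfly _ _) fun z hz => by
          rw [ha _ (mem_bfly.1 hz).1, ha _ (mem_bfly.1 hz).2.1, add_sub_add_right_eq_sub]
    _ = 2 ^ (-p.1) * (∑ q ∈ G, c q ^ 2) + 2 ^ (-p.1) * (if p ∈ F then c p else 0) ^ 2 := by
        rw [setIntegral_bfly_sub_sq ((memLp_haarSum G c 2).restrict _), hmean, hnorm,
          integral_haarSum_mul_haar, zero_pow two_ne_zero, sub_zero]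
        simp only [hp]
    _ = 2 ^ (-p.1) * ((∑ q ∈ F, if dyI q.1 q.2 ⊆ dyI p.1 p.2 then c q ^ 2 else 0) +
          if p ∈ F then c p ^ 2 else 0) := by
        rw [hG, Finset.sum_filter, ← mul_add, ite_pow, zero_pow two_ne_zero]

open scoped Classical in
lemma hasSum_two_rpow_of_dyI_subset {t : ℝ} (ht : 0 < t) (q : ℤ × ℕ) :
    HasSum (fun p : ℤ × ℕ => if dyI q.1 q.2 ⊆ dyI p.1 p.2 then (2 : ℝ) ^ (t * p.1) else 0)
      (2 ^ (t * q.1) * (1 - 2 ^ (-t))⁻¹) := by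
  have hinj : Function.Injective fun l : ℕ => ((q.1 - l, q.2 / 2 ^ l) : ℤ × ℕ) :=
    fun l m h => by simpa using congrArg Prod.fst h
  rw [← hinj.hasSum_iff fun p hp => if_neg fun h => hp ?_]
  · have hgeom := hasSum_geometric_of_lt_one (Real.rpow_nonneg two_pos.le (-t))
      (Real.rpow_lt_one_of_one_lt_of_neg one_lt_two (neg_lt_zero.2 ht))
    refine (hgeom.mul_left ((2 : ℝ) ^ (t * q.1))).congr_fun fun l => ?_
    dsimp only [Function.comp_apply]
    rw [if_pos (dyI_subset_dyI_iff.2 ⟨l, rfl⟩), ← Real.rpow_mul_natCast two_pos.le,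
      ← Real.rpow_add two_pos]
    push_cast
    ring_nf
  · obtain ⟨l, rfl⟩ := dyI_subset_dyI_iff.1 h
    exact mem_range_self l

/-- The integrand `|f(x) - f(y)|² δ(x,y)^{-(1+2s)}` of the dyadic energy `E^δ_s(f)`. On the
diagonal `δ` vanishes, but so does `f(x) - f(y)`. -/
def energyDensity (s : ℝ) (f : ℝ → ℝ) (z : ℝ × ℝ) : ℝ :=
  (f z.1 - f z.2) ^ 2 * dyDist z.1 z.2 ^ (-(1 + 2 * s))

/-- The ratio `1 + (1 - 2^{-2s})⁻¹` between the dyadic energy of order `s` and the squared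
`L²(ℝ⁺, ℓ²)` norm of the gradient of order `s`. -/
def energyConst (s : ℝ) : ℝ := 1 + (1 - 2 ^ (-(2 * s)))⁻¹

lemma energyConst_pos {s : ℝ} (hs : 0 < s) : 0 < energyConst s := by
  have : (2 : ℝ) ^ (-(2 * s)) < 1 := Real.rpow_lt_one_of_one_lt_of_neg one_lt_two (by linarith)
  exact add_pos one_pos (inv_pos.2 (sub_pos.2 this))

section EnergyDensity

variable (s : ℝ)

lemma energyDensity_nonneg (f : ℝ → ℝ) (z : ℝ × ℝ) : 0 ≤ energyDensity s f z := by
  have : 0 ≤ dyDist z.1 z.2 := by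
    rw [dyDist]
    split_ifs
    exacts [le_rfl, ENNReal.toReal_nonneg]
  exact mul_nonneg (sq_nonneg _) (Real.rpow_nonneg this _)

lemma energyDensity_eq_zero_of_mem_sdiff_iUnion_bfly (f : ℝ → ℝ) {z : ℝ × ℝ}
    (hz : z ∈ (Ici (0 : ℝ) ×ˢ Ici (0 : ℝ)) \ ⋃ p : ℤ × ℕ, bfly p.1 p.2) :
    energyDensity s f z = 0 := by
  rw [iUnion_bfly, sdiff_sdiff_right_self] at hz
  rw [energyDensity, mem_diagonal_iff.1 hz.2, sub_self, sq, zero_mul, zero_mul]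

lemma energyDensity_of_mem_bfly (f : ℝ → ℝ) {j : ℤ} {k : ℕ} {z : ℝ × ℝ} (hz : z ∈ bfly j k) :
    energyDensity s f z = 2 ^ ((1 + 2 * s) * j) * (f z.1 - f z.2) ^ 2 := by
  rw [energyDensity, dyDist_of_mem_bfly hz, two_zpow_neg_rpow_neg, mul_comm]

variable (F : Finset (ℤ × ℕ)) (c : ℤ × ℕ → ℝ)

lemma integrableOn_bfly_energyDensity_haarSum (p : ℤ × ℕ) :
    IntegrableOn (energyDensity s (haarSum F c)) (bfly p.1 p.2) :=
  IntegrableOn.congr_fun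
    ((integrableOn_bfly_sub_sq ((memLp_haarSum F c 2).restrict _)).const_mul _)
    (fun _ hz => (energyDensity_of_mem_bfly s _ hz).symm) (measurableSet_bfly _ _)

open scoped Classical in
lemma setIntegral_bfly_energyDensity_haarSum (p : ℤ × ℕ) :
    ∫ z in bfly p.1 p.2, energyDensity s (haarSum F c) z =
      2 ^ (2 * s * p.1) * ((∑ q ∈ F, if dyI q.1 q.2 ⊆ dyI p.1 p.2 then c q ^ 2 else 0) +
        if p ∈ F then c p ^ 2 else 0) := by
  have hpow : (2 : ℝ) ^ ((1 + 2 * s) * p.1) * 2 ^ (-p.1) = 2 ^ (2 * s * p.1) := by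
    rw [← Real.rpow_intCast, ← Real.rpow_add two_pos]
    push_cast
    ring_nf
  rw [setIntegral_congr_fun (measurableSet_bfly _ _)
    fun z hz => energyDensity_of_mem_bfly s (haarSum F c) hz, integral_const_mul,
    setIntegral_bfly_haarSum_sub_sq, ← mul_assoc, hpow]

variable {s}

lemma hasSum_setIntegral_bfly_energyDensity_haarSum (hs : 0 < s) :
    HasSum (fun p : ℤ × ℕ => ∫ z in bfly p.1 p.2, energyDensity s (haarSum F c) z)
      (energyConst s * ∑ p ∈ F, 2 ^ (2 * s * p.1) * c p ^ 2) := by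
  classical
  have hancestors := hasSum_sum fun q (_ : q ∈ F) =>
    (hasSum_two_rpow_of_dyI_subset (mul_pos two_pos hs) q).mul_right (c q ^ 2)
  have hdiag : HasSum (fun p : ℤ × ℕ => if p ∈ F then (2 : ℝ) ^ (2 * s * p.1) * c p ^ 2 else 0)
      (∑ p ∈ F, 2 ^ (2 * s * p.1) * c p ^ 2) := by
    rw [← Finset.sum_congr rfl fun p hp => if_pos hp]
    exact hasSum_sum_of_ne_finset_zero fun p hp => if_neg hp
  have hvalue : energyConst s * ∑ p ∈ F, 2 ^ (2 * s * p.1) * c p ^ 2 =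
      (∑ q ∈ F, 2 ^ (2 * s * q.1) * (1 - 2 ^ (-(2 * s)))⁻¹ * c q ^ 2) +
        ∑ p ∈ F, 2 ^ (2 * s * p.1) * c p ^ 2 := by
    rw [energyConst, add_comm, add_mul, one_mul, Finset.mul_sum]
    simp only [mul_left_comm, mul_assoc]
  rw [hvalue]
  refine (hancestors.add hdiag).congr_fun fun p => ?_
  rw [setIntegral_bfly_energyDensity_haarSum, mul_add, Finset.mul_sum]
  simp only [mul_ite, ite_mul, mul_zero, zero_mul]

lemma integrableOn_iUnion_bfly_energyDensity_haarSum (hs : 0 < s) :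
    IntegrableOn (energyDensity s (haarSum F c)) (⋃ p : ℤ × ℕ, bfly p.1 p.2) := by
  refine integrableOn_iUnion_of_summable_integral_norm
    (integrableOn_bfly_energyDensity_haarSum s F c) ?_
  simp only [Real.norm_of_nonneg (energyDensity_nonneg s _ _)]
  exact (hasSum_setIntegral_bfly_energyDensity_haarSum F c hs).summable

lemma integrableOn_quadrant_energyDensity_haarSum (hs : 0 < s) :
    IntegrableOn (energyDensity s (haarSum F c)) (Ici 0 ×ˢ Ici 0) :=
  (integrableOn_iUnion_bfly_energyDensity_haarSum F c hs).of_forall_sdiff_eq_zero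
    (measurableSet_Ici.prod measurableSet_Ici)
    fun _ => energyDensity_eq_zero_of_mem_sdiff_iUnion_bfly _ _

theorem dyEnergy_haarSum (hs : 0 < s) :
    dyEnergy s (haarSum F c) = energyConst s * ∑ p ∈ F, 2 ^ (2 * s * p.1) * c p ^ 2 := by
  have hquadrant := integrableOn_quadrant_energyDensity_haarSum F c hs
  calc dyEnergy s (haarSum F c)
      = ∫ z in Ici (0 : ℝ) ×ˢ Ici (0 : ℝ), energyDensity s (haarSum F c) z :=
        (setIntegral_prod _ hquadrant).symm
    _ = ∫ z in ⋃ p : ℤ × ℕ, bfly p.1 p.2, energyDensity s (haarSum F c) z :=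
        setIntegral_eq_of_subset_of_forall_sdiff_eq_zero
          (measurableSet_Ici.prod measurableSet_Ici) (iUnion_bfly ▸ sdiff_subset)
          fun _ => energyDensity_eq_zero_of_mem_sdiff_iUnion_bfly _ _
    _ = ∑' p : ℤ × ℕ, ∫ z in bfly p.1 p.2, energyDensity s (haarSum F c) z :=
        integral_iUnion (fun p => measurableSet_bfly p.1 p.2) pairwise_disjoint_bfly
          (integrableOn_iUnion_bfly_energyDensity_haarSum F c hs)
    _ = energyConst s * ∑ p ∈ F, 2 ^ (2 * s * p.1) * c p ^ 2 :=
        (hasSum_setIntegral_bfly_energyDensity_haarSum F c hs).tsum_eq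

theorem lintegral_energyDensity_haarSum_lt_top (hs : 0 < s) :
    ∫⁻ x in Ici (0 : ℝ), ∫⁻ y in Ici (0 : ℝ),
      ENNReal.ofReal (energyDensity s (haarSum F c) (x, y)) < ⊤ := by
  have hquadrant := integrableOn_quadrant_energyDensity_haarSum F c hs
  rw [IntegrableOn, Measure.volume_eq_prod, ← Measure.prod_restrict] at hquadrant
  rw [← lintegral_prod _ hquadrant.aemeasurable.ennreal_ofReal]
  exact hquadrant.lintegral_lt_top

end EnergyDensity

lemma tsum_volume_dyI_rpow_mul_integral_haarSum_mul_haar_sq (F : Finset (ℤ × ℕ)) (c : ℤ × ℕ → ℝ)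
    (s : ℝ) :
    ∑' p : ℤ × ℕ, (volume (dyI p.1 p.2)).toReal ^ (-(2 * s)) *
      (∫ y, haarSum F c y * haar p.1 p.2 y) ^ 2 = ∑ p ∈ F, 2 ^ (2 * s * p.1) * c p ^ 2 := by
  simp only [← measureReal_def, volume_real_dyI, two_zpow_neg_rpow_neg, integral_haarSum_mul_haar]
  rw [tsum_eq_sum (s := F) fun p hp => by rw [if_neg hp, zero_pow two_ne_zero, mul_zero]]
  exact Finset.sum_congr rfl fun p hp => by rw [if_pos hp]

theorem energy_eq_const_mul_sum_partials_general (s : ℝ) (hs0 : 0 < s) :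
    (∀ f : ℝ → ℝ, HaarSpan f →
      ∑' i : ℕ, ∫ x, (Dsi s i f x) ^ 2 =
        ∑' p : ℤ × ℕ,
          (volume (dyI p.1 p.2)).toReal ^ (-(2 * s)) * (∫ y, f y * haar p.1 p.2 y) ^ 2) ∧
    (∃ c : ℝ, 0 < c ∧ ∀ f : ℝ → ℝ, HaarSpan f →
      dyEnergy s f = c * ∑' i : ℕ, ∫ x, (Dsi s i f x) ^ 2) ∧
    (∀ f : ℝ → ℝ, HaarSpan f →
      ((∫⁻ x in Set.Ici (0 : ℝ), ∫⁻ y in Set.Ici (0 : ℝ),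
          ENNReal.ofReal ((f x - f y) ^ 2 * dyDist x y ^ (-(1 + 2 * s)))) < ⊤ ↔
        (∑' i : ℕ, ∫⁻ x, ENNReal.ofReal ((Dsi s i f x) ^ 2)) < ⊤)) := by
  refine ⟨?_, ⟨energyConst s, energyConst_pos hs0, ?_⟩, ?_⟩ <;> rintro _ ⟨F, c, rfl⟩
  · exact (hasSum_integral_Dsi_haarSum_sq F c s).tsum_eq.trans
      (tsum_volume_dyI_rpow_mul_integral_haarSum_mul_haar_sq F c s).symm
  · exact (dyEnergy_haarSum F c hs0).trans
      (congrArg _ (hasSum_integral_Dsi_haarSum_sq F c s).tsum_eq.symm)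
  · exact iff_of_true (lintegral_energyDensity_haarSum_lt_top F c hs0)
      (tsum_lintegral_Dsi_haarSum_sq_lt_top F c s)

/-- for `f` in the finite linear span of the Haar system,
`Σ_i ‖D^s_{(i)} f‖₂² = Σ_{h ∈ H} |I(h)|^{-2s} |⟨f,h⟩|²`, the dyadic energy equals
`c Σ_i ‖D^s_{(i)} f‖₂²` for a constant `c > 0` independent of `f`, and in
particular the energy is finite iff the gradient `(D^s_{(i)} f)_i ∈ L²(ℝ⁺, ℓ²)`. -/
theorem energy_eq_const_mul_sum_partials (s : ℝ) (hs0 : 0 < s) (hs1 : s < 1) :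
    (∀ f : ℝ → ℝ, HaarSpan f →
      ∑' i : ℕ, ∫ x, (Dsi s i f x) ^ 2 =
        ∑' p : ℤ × ℕ,
          (volume (dyI p.1 p.2)).toReal ^ (-(2 * s)) * (∫ y, f y * haar p.1 p.2 y) ^ 2) ∧
    (∃ c : ℝ, 0 < c ∧ ∀ f : ℝ → ℝ, HaarSpan f →
      dyEnergy s f = c * ∑' i : ℕ, ∫ x, (Dsi s i f x) ^ 2) ∧
    (∀ f : ℝ → ℝ, HaarSpan f →
      ((∫⁻ x in Set.Ici (0 : ℝ), ∫⁻ y in Set.Ici (0 : ℝ),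
          ENNReal.ofReal ((f x - f y) ^ 2 * dyDist x y ^ (-(1 + 2 * s)))) < ⊤ ↔
        (∑' i : ℕ, ∫⁻ x, ENNReal.ofReal ((Dsi s i f x) ^ 2)) < ⊤)) :=
  energy_eq_const_mul_sum_partials_general s hs0
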